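/- Fix a field k and integers s, p with s ≥ 1. Let φ : E' → E be a morphism of homologically graded spectral sequences of k-vector spaces starting at page s, such that φ^s_{m,q} : E'^s_{m,q} → E^s_{m,q} is an isomorphism for all m ≤ p and all q, and E'^s_{m,q} = 0 for all m > p and all q. For an integer i ≥ s and a bidegree (m,q) with m ≤ p, let Im(d^i_c)_{m,q} denote the subspace d^i(E^i_{m+i, q−i+1}) of E^i_{m,q} if m + i > p, and the zero space if m + i ≤ p (i.e., the image in bidegree (m,q) of the restriction of the differential of E to filtration degrees > p). Then for every r ≥ s, every m ≤ p and every q, the map φ^r_{m,q} : E'^r_{m,q} → E^r_{m,q} is surjective and there is an isomorphism of k-vector spaces E'^r_{m,q} ≅ E^r_{m,q} ⊕ (⊕_{s ≤ i < r} Im(d^i_c)_{m,q}) under which φ^r_{m,q} corresponds to the projection onto the first summand. -/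

import Mathlib

universe u

/-- A homologically graded spectral sequence of `k`-vector spaces starting at page `s`:
`k`-vector spaces `E^r_{m,q}` for `r ≥ s` (here given for all `r ∈ ℤ`; only the pages
`r ≥ s` are constrained), differentials `d^r : E^r_{m,q} → E^r_{m-r,q+r-1}` (formalized,
as for `HomologicalComplex`, as maps `E^r_{m,q} → E^r_{m',q'}` vanishing unless
`m' = m - r` and `q' = q + r - 1`) with `d^r ∘ d^r = 0`, and specified isomorphisms
`E^{r+1}_{m,q} ≅ ker(d^r : E^r_{m,q} → E^r_{m-r,q+r-1}) / im(d^r : E^r_{m+r,q-r+1} → E^r_{m,q})`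
for `r ≥ s`. -/
structure SpectralSequence (k : Type*) [Field k] (s : ℤ) where
  /-- the pages -/
  E : ℤ → ℤ → ℤ → Type u
  [acg : ∀ r m q : ℤ, AddCommGroup (E r m q)]
  [mod : ∀ r m q : ℤ, Module k (E r m q)]
  /-- the differentials -/
  d : ∀ r m q m' q' : ℤ, E r m q →ₗ[k] E r m' q'
  d_shape : ∀ r m q m' q' : ℤ, ¬(m' = m - r ∧ q' = q + r - 1) → d r m q m' q' = 0
  d_comp_d : ∀ r m q m' q' m'' q'' : ℤ, (d r m' q' m'' q'').comp (d r m q m' q') = 0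
  /-- the specified isomorphisms of each page `r + 1` (for `r ≥ s`) with the homology
  of page `r` -/
  iso : ∀ (r m q : ℤ), s ≤ r →
    E (r + 1) m q ≃ₗ[k]
      (LinearMap.ker (d r m q (m - r) (q + r - 1)) ⧸
        Submodule.comap (LinearMap.ker (d r m q (m - r) (q + r - 1))).subtype
          (LinearMap.range (d r (m + r) (q - r + 1) m q)))

attribute [instance] SpectralSequence.acg SpectralSequence.mod

/-- A morphism of spectral sequences: `k`-linear maps on each page commuting with the
differentials and compatible, via the specified isomorphisms, with the maps induced on
homology. -/
structure SpectralSequenceHom {k : Type*} [Field k] {s : ℤ}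
    (E' E : SpectralSequence.{u} k s) where
  /-- the maps on each page -/
  φ : ∀ r m q : ℤ, E'.E r m q →ₗ[k] E.E r m q
  comm : ∀ r m q m' q' : ℤ,
    (E.d r m q m' q').comp (φ r m q) = (φ r m' q').comp (E'.d r m q m' q')
  compat : ∀ (r m q : ℤ) (h : s ≤ r)
    (x : LinearMap.ker (E'.d r m q (m - r) (q + r - 1))),
    (E.iso r m q h) (φ (r + 1) m q ((E'.iso r m q h).symm (Submodule.Quotient.mk x))) =
      Submodule.Quotient.mk
        ⟨φ r m q x.1, by
          have h1 := LinearMap.congr_fun (comm r m q (m - r) (q + r - 1)) x.1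
          simp only [LinearMap.coe_comp, Function.comp_apply] at h1
          have h2 : (E'.d r m q (m - r) (q + r - 1)) x.1 = 0 := x.2
          rw [LinearMap.mem_ker, h1, h2, map_zero]⟩

/-- `Im(d^i_c)_{m,q}`: the image in bidegree `(m,q)` of the restriction of the
differential `d^i` of `E` to filtration degrees `> p`, i.e.
`d^i(E^i_{m+i,q-i+1}) ⊆ E^i_{m,q}` if `m + i > p` and `0` otherwise. -/
def imDc {k : Type*} [Field k] {s : ℤ} (E : SpectralSequence.{u} k s) (p : ℤ)
    (i m q : ℤ) : Submodule k (E.E i m q) :=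
  if p < m + i then LinearMap.range (E.d i (m + i) (q - i + 1) m q) else ⊥

/-!
By induction on `r`, the page `E'^r` vanishes in filtration `> p`, and in filtration `m ≤ p` the map
`φ^r` is onto, and injective as long as `m ≤ p + 1 - r`, where no differential `d^i` with `i < r`
starting in filtration `> p` lands. Consequently, in filtration `≤ p`, the cycles of `E'^r` are
exactly the preimages of the cycles of `E^r`. When `m + r > p`, nothing hits bidegree `(m, q)` in
`E'^r`, so there `ker φ^{r+1}` is the preimage under `φ^r` of the boundaries `Im(d^r_c)`, an
extension of `Im(d^r_c)` by `ker φ^r`; when `m + r ≤ p`, both kernels vanish. Over a field all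
these extensions split.
-/

section LinearAlgebra

variable {R M N : Type*} [Ring R] [AddCommGroup M] [Module R M] [AddCommGroup N] [Module R N]

theorem exists_linearEquiv_prod_ker [Module.Projective R N] (f : M →ₗ[R] N)
    (hf : Function.Surjective f) :
    ∃ e : M ≃ₗ[R] N × LinearMap.ker f, ∀ x, (e x).1 = f x := by
  obtain ⟨g, hg⟩ := Module.projective_lifting_property f LinearMap.id hf
  obtain ⟨e, -, he⟩ :=
    f.exact_subtype_ker_map.splitSurjectiveEquiv (LinearMap.ker f).injective_subtype ⟨g, hg⟩
  exact ⟨e.trans (LinearEquiv.prodComm R _ _), fun x ↦ (LinearMap.congr_fun he x).symm⟩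

theorem nonempty_comap_linearEquiv_prod_ker (f : M →ₗ[R] N) (hf : Function.Surjective f)
    (P : Submodule R N) [Module.Projective R P] :
    Nonempty (P.comap f ≃ₗ[R] P × LinearMap.ker f) := by
  have hle : LinearMap.ker f ≤ P.comap f := LinearMap.ker_le_comap f
  have hker : LinearMap.ker (f.submoduleComap P) =
      (LinearMap.ker f).comap (P.comap f).subtype := by
    ext x
    exact Subtype.ext_iff
  obtain ⟨e, -⟩ := exists_linearEquiv_prod_ker (f.submoduleComap P)
    (f.submoduleComap_surjective_of_surjective P hf)
  exact ⟨e.trans ((LinearEquiv.refl R P).prodCongr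
    ((LinearEquiv.ofEq _ _ hker).trans (Submodule.comapSubtypeEquivOfLe hle)))⟩

end LinearAlgebra

theorem nonempty_pi_insert_linearEquiv_prod {R ι : Type*} [Semiring R] [DecidableEq ι]
    (M : ι → Type*) [∀ i, AddCommMonoid (M i)] [∀ i, Module R (M i)] {t : Finset ι} {a : ι}
    (ha : a ∉ t) :
    Nonempty (((i : (insert a t : Finset ι)) → M i) ≃ₗ[R] M a × ((i : t) → M i)) :=
  let e := Finset.subtypeInsertEquivOption ha
  ⟨(LinearEquiv.piCongrLeft R (fun i : (insert a t : Finset ι) ↦ M i) e.symm).symm.trans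
    (LinearEquiv.piOptionEquivProd R)⟩

namespace SpectralSequence

variable {k : Type*} [Field k] {s : ℤ} (E : SpectralSequence.{u} k s)

/-- The cycles of the page `r` in bidegree `(m, q)`. -/
abbrev cycles (r m q : ℤ) : Submodule k (E.E r m q) :=
  LinearMap.ker (E.d r m q (m - r) (q + r - 1))

/-- The boundaries of the page `r` in bidegree `(m, q)`. -/
abbrev boundaries (r m q : ℤ) : Submodule k (E.E r m q) :=
  LinearMap.range (E.d r (m + r) (q - r + 1) m q)

theorem boundaries_le_cycles (r m q : ℤ) : E.boundaries r m q ≤ E.cycles r m q :=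
  LinearMap.range_le_ker_iff.2 (E.d_comp_d ..)

/-- The map sending a cycle of the page `r` to its homology class, regarded as an element of the
page `r + 1` through the specified isomorphism. -/
def homologyClass {r : ℤ} (hr : s ≤ r) (m q : ℤ) : E.cycles r m q →ₗ[k] E.E (r + 1) m q :=
  (E.iso r m q hr).symm.toLinearMap ∘ₗ Submodule.mkQ _

variable {r : ℤ} (hr : s ≤ r) {m q : ℤ}

theorem homologyClass_surjective : Function.Surjective (E.homologyClass hr m q) :=
  (E.iso r m q hr).symm.surjective.comp (Submodule.mkQ_surjective _)

theorem homologyClass_eq_zero_iff {x : E.cycles r m q} :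
    E.homologyClass hr m q x = 0 ↔ (x : E.E r m q) ∈ E.boundaries r m q := by
  simp [homologyClass, Submodule.Quotient.mk_eq_zero]

end SpectralSequence

theorem imDc_of_lt {k : Type*} [Field k] {s : ℤ} (E : SpectralSequence.{u} k s) {p i m : ℤ}
    (q : ℤ) (h : p < m + i) : imDc E p i m q = E.boundaries i m q :=
  if_pos h

theorem imDc_of_le {k : Type*} [Field k] {s : ℤ} (E : SpectralSequence.{u} k s) {p i m : ℤ}
    (q : ℤ) (h : m + i ≤ p) : imDc E p i m q = ⊥ :=
  if_neg h.not_gt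

namespace SpectralSequenceHom

variable {k : Type*} [Field k] {s : ℤ} {E' E : SpectralSequence.{u} k s}
  (φ : SpectralSequenceHom E' E)

theorem comm_apply (r m q m' q' : ℤ) (x : E'.E r m q) :
    E.d r m q m' q' (φ.φ r m q x) = φ.φ r m' q' (E'.d r m q m' q' x) :=
  LinearMap.congr_fun (φ.comm r m q m' q') x

theorem cycles_le_comap_cycles (r m q : ℤ) :
    E'.cycles r m q ≤ (E.cycles r m q).comap (φ.φ r m q) := by
  intro x hx
  rw [Submodule.mem_comap, LinearMap.mem_ker, comm_apply, LinearMap.mem_ker.1 hx, map_zero]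

section

variable {r : ℤ} (hr : s ≤ r) {m q : ℤ}

theorem map_homologyClass (x : E'.cycles r m q) :
    φ.φ (r + 1) m q (E'.homologyClass hr m q x) =
      E.homologyClass hr m q ⟨φ.φ r m q x, φ.cycles_le_comap_cycles r m q x.2⟩ :=
  (LinearEquiv.eq_symm_apply _).2 (φ.compat r m q hr x)

theorem map_homologyClass_eq_zero_iff {x : E'.cycles r m q} :
    φ.φ (r + 1) m q (E'.homologyClass hr m q x) = 0 ↔
      φ.φ r m q x ∈ E.boundaries r m q := by
  rw [map_homologyClass, E.homologyClass_eq_zero_iff]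

end

/-- The properties of the page `r` of a comparison morphism that pass to the next page. The bound
`m + r ≤ p + 1` says that no differential `d^i` with `i < r` maps filtration `> p` to filtration
`m`. -/
structure IsComparisonBelow (p r : ℤ) : Prop where
  subsingleton {m : ℤ} (q : ℤ) : p < m → Subsingleton (E'.E r m q)
  surjective {m : ℤ} (q : ℤ) : m ≤ p → Function.Surjective (φ.φ r m q)
  injective {m : ℤ} (q : ℤ) : m ≤ p → m + r ≤ p + 1 → Function.Injective (φ.φ r m q)

namespace IsComparisonBelow

variable {φ} {p r : ℤ}

theorem cycles_eq_comap (h : φ.IsComparisonBelow p r) {m : ℤ} (q : ℤ) (hm : m ≤ p) :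
    E'.cycles r m q = (E.cycles r m q).comap (φ.φ r m q) := by
  refine (φ.cycles_le_comap_cycles r m q).antisymm fun x hx ↦ ?_
  rw [Submodule.mem_comap, LinearMap.mem_ker, comm_apply] at hx
  rcases lt_or_ge p (m - r) with hlt | hle
  · have := h.subsingleton (q + r - 1) hlt
    exact Subsingleton.elim _ _
  · exact (map_eq_zero_iff _ (h.injective _ hle (by lia))).1 hx

theorem subsingleton_succ (h : φ.IsComparisonBelow p r) (hr : s ≤ r) {m : ℤ} (q : ℤ)
    (hm : p < m) : Subsingleton (E'.E (r + 1) m q) :=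
  have := h.subsingleton q hm
  (E'.homologyClass_surjective hr).subsingleton

theorem surjective_succ (h : φ.IsComparisonBelow p r) (hr : s ≤ r) {m : ℤ} (q : ℤ)
    (hm : m ≤ p) : Function.Surjective (φ.φ (r + 1) m q) := by
  intro y
  obtain ⟨⟨z, hz⟩, rfl⟩ := E.homologyClass_surjective hr y
  obtain ⟨x, rfl⟩ := h.surjective q hm z
  have hx : x ∈ E'.cycles r m q := by rwa [h.cycles_eq_comap q hm]
  exact ⟨E'.homologyClass hr m q ⟨x, hx⟩, φ.map_homologyClass hr _⟩

theorem injective_succ (h : φ.IsComparisonBelow p r) (hr : s ≤ r) {m : ℤ} (q : ℤ)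
    (hm : m ≤ p) (hmr : m + r ≤ p) : Function.Injective (φ.φ (r + 1) m q) := by
  rw [injective_iff_map_eq_zero]
  intro y hy
  obtain ⟨x, rfl⟩ := E'.homologyClass_surjective hr y
  obtain ⟨z, hz⟩ := (φ.map_homologyClass_eq_zero_iff hr).1 hy
  obtain ⟨w, rfl⟩ := h.surjective _ hmr z
  rw [comm_apply] at hz
  exact (E'.homologyClass_eq_zero_iff hr).2 ⟨w, h.injective q hm (by lia) hz⟩

theorem succ (h : φ.IsComparisonBelow p r) (hr : s ≤ r) : φ.IsComparisonBelow p (r + 1) where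
  subsingleton := h.subsingleton_succ hr
  surjective := h.surjective_succ hr
  injective q hm hmr := h.injective_succ hr q hm (by lia)

theorem of_le (h : φ.IsComparisonBelow p s) (hr : s ≤ r) : φ.IsComparisonBelow p r := by
  induction r, hr using Int.leInduction with
  | base => exact h
  | succ r hr ih => exact ih.succ hr

theorem homologyClass_bijective (h : φ.IsComparisonBelow p r) (hr : s ≤ r) {m : ℤ} (q : ℤ)
    (hmr : p < m + r) : Function.Bijective (E'.homologyClass hr m q) := by
  have := h.subsingleton (q - r + 1) hmr
  refine ⟨(injective_iff_map_eq_zero _).2 fun x hx ↦ ?_, E'.homologyClass_surjective hr⟩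
  obtain ⟨z, hz⟩ := (E'.homologyClass_eq_zero_iff hr).1 hx
  rw [Subsingleton.elim z 0, map_zero] at hz
  exact Subtype.ext hz.symm

theorem nonempty_ker_succ_equiv_comap_boundaries (h : φ.IsComparisonBelow p r) (hr : s ≤ r)
    {m : ℤ} (q : ℤ) (hm : m ≤ p) (hmr : p < m + r) :
    Nonempty (LinearMap.ker (φ.φ (r + 1) m q) ≃ₗ[k]
      (E.boundaries r m q).comap (φ.φ r m q)) := by
  let e := LinearEquiv.ofBijective _ (h.homologyClass_bijective hr q hmr)
  have hker : (LinearMap.ker (φ.φ (r + 1) m q)).comap e.toLinearMap =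
      ((E.boundaries r m q).comap (φ.φ r m q)).comap (E'.cycles r m q).subtype := by
    ext x
    exact φ.map_homologyClass_eq_zero_iff hr
  have hle : (E.boundaries r m q).comap (φ.φ r m q) ≤ E'.cycles r m q := by
    rw [h.cycles_eq_comap q hm]
    exact Submodule.comap_mono (E.boundaries_le_cycles r m q)
  exact ⟨(e.ofSubmodule' _).symm.trans
    ((LinearEquiv.ofEq _ _ hker).trans (Submodule.comapSubtypeEquivOfLe hle))⟩

theorem nonempty_ker_succ_equiv_prod (h : φ.IsComparisonBelow p r) (hr : s ≤ r) {m : ℤ} (q : ℤ)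
    (hm : m ≤ p) :
    Nonempty (LinearMap.ker (φ.φ (r + 1) m q) ≃ₗ[k]
      imDc E p r m q × LinearMap.ker (φ.φ r m q)) := by
  rcases lt_or_ge p (m + r) with hlt | hle
  · obtain ⟨e₁⟩ := h.nonempty_ker_succ_equiv_comap_boundaries hr q hm hlt
    obtain ⟨e₂⟩ := nonempty_comap_linearEquiv_prod_ker (φ.φ r m q) (h.surjective q hm)
      (E.boundaries r m q)
    rw [imDc_of_lt E q hlt]
    exact ⟨e₁.trans e₂⟩
  · rw [imDc_of_le E q hle, LinearMap.ker_eq_bot.2 (h.injective q hm (by lia)),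
      LinearMap.ker_eq_bot.2 (h.injective_succ hr q hm hle)]
    exact ⟨0⟩

theorem nonempty_ker_equiv_pi_imDc (h : φ.IsComparisonBelow p s) (hr : s ≤ r) {m : ℤ} (q : ℤ)
    (hm : m ≤ p) (hinj : Function.Injective (φ.φ s m q)) :
    Nonempty (LinearMap.ker (φ.φ r m q) ≃ₗ[k]
      ((i : (Finset.Ico s r : Finset ℤ)) → imDc E p i m q)) := by
  induction r, hr using Int.leInduction with
  | base =>
    rw [LinearMap.ker_eq_bot.2 hinj, Finset.Ico_self]
    exact ⟨0⟩
  | succ r hr ih =>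
    obtain ⟨e₁⟩ := (h.of_le hr).nonempty_ker_succ_equiv_prod hr q hm
    obtain ⟨e₂⟩ := ih
    obtain ⟨e₃⟩ := nonempty_pi_insert_linearEquiv_prod (R := k) (fun i ↦ imDc E p i m q)
      (Finset.right_notMem_Ico (a := s) (b := r))
    rw [← Finset.insert_Ico_right_eq_Ico_add_one hr]
    exact ⟨e₁.trans (((LinearEquiv.refl k _).prodCongr e₂).trans e₃.symm)⟩

end IsComparisonBelow

end SpectralSequenceHom

theorem spectral_sequence_comparison_below_general
    {k : Type*} [Field k] {s p : ℤ}
    (E' E : SpectralSequence.{u} k s) (φ : SpectralSequenceHom E' E)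
    (hiso : ∀ m q : ℤ, m ≤ p → Function.Bijective (φ.φ s m q))
    (hzero : ∀ m q : ℤ, p < m → ∀ x : E'.E s m q, x = 0)
    (r : ℤ) (hr : s ≤ r) (m q : ℤ) (hm : m ≤ p) :
    Function.Surjective (φ.φ r m q) ∧
    ∃ e : E'.E r m q ≃ₗ[k]
        (E.E r m q × ((i : (Finset.Ico s r : Finset ℤ)) → imDc E p i.1 m q)),
      ∀ x : E'.E r m q, (e x).1 = φ.φ r m q x := by
  have hs : φ.IsComparisonBelow p s :=
    { subsingleton q hm := subsingleton_of_forall_eq 0 (hzero _ q hm)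
      surjective q hm := (hiso _ q hm).surjective
      injective q hm _ := (hiso _ q hm).injective }
  have hsurj : Function.Surjective (φ.φ r m q) := (hs.of_le hr).surjective q hm
  obtain ⟨e, he⟩ := exists_linearEquiv_prod_ker (φ.φ r m q) hsurj
  obtain ⟨eker⟩ := hs.nonempty_ker_equiv_pi_imDc hr q hm (hiso m q hm).injective
  exact ⟨hsurj, e.trans ((LinearEquiv.refl k _).prodCongr eker), he⟩

theorem spectral_sequence_comparison_below
    {k : Type*} [Field k] {s p : ℤ} (hs : 1 ≤ s)
    (E' E : SpectralSequence.{u} k s) (φ : SpectralSequenceHom E' E)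
    (hiso : ∀ m q : ℤ, m ≤ p → Function.Bijective (φ.φ s m q))
    (hzero : ∀ m q : ℤ, p < m → ∀ x : E'.E s m q, x = 0)
    (r : ℤ) (hr : s ≤ r) (m q : ℤ) (hm : m ≤ p) :
    Function.Surjective (φ.φ r m q) ∧
    ∃ e : E'.E r m q ≃ₗ[k]
        (E.E r m q × ((i : (Finset.Ico s r : Finset ℤ)) → imDc E p i.1 m q)),
      ∀ x : E'.E r m q, (e x).1 = φ.φ r m q x :=
  spectral_sequence_comparison_below_general E' E φ hiso hzero r hr m q hm
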